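/- Consider the zig-zag triangulation of an n-gon whose triangles are θ_i = (i, i+1, i+2) for 1 ≤ i ≤ n−2, with the default orientation, and define λ_{k,n} and [k,k+1,n] by the downward super Ptolemy recursion obtained by flipping the arcs (n−1,n−2), (n−2,n−3), …, (k+2,k+1) as in Theorem 6.4(a). Then for every k: λ_{k,n} = Σ_{t ∈ 𝒯_{k,n}} wt(t), the sum of the weights of all super T-paths from k to n in the zig-zag triangulation. -/

import Mathlib

namespace ZigZag

/-!  Combinatorics of the zig-zag triangulation of an `n`-gon.

The vertices are labelled `1, …, n`; in convex position their cyclic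
(counterclockwise) order is `1, 2, 4, 6, …, n, n-1, …, 5, 3`.  The triangles are
`θ_i = (i, i+1, i+2)` for `1 ≤ i ≤ n-2`; the internal diagonals are `(j, j+1)`
for `2 ≤ j ≤ n-2` and the other pairs `(j, j+1)`, `(j, j+2)` are boundary edges.
The default orientation orients the diagonals `2 → 3 → ⋯ → n-1`. -/

/-- The position of the labelled vertex `v` in the convex (counterclockwise)
cyclic order `1, 2, 4, 6, …, n, n-1, …, 5, 3` of the `n`-gon. -/
def pos (n v : ℕ) : ℕ :=
  if v = 1 then 0 else if v % 2 = 0 then v / 2 else n - (v - 1) / 2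

/-- For an oriented chord of the convex polygon going from position `u` to
position `v`, the position `w` lies (strictly) on its left side. -/
def inLeft (u v w : ℕ) : Bool :=
  if u < v then decide (u < w ∧ w < v) else decide (w < v ∨ u < w)

/-- The triangle `θ_k = (k, k+1, k+2)` lies to the right of the diagonal
`(k+1, k+2)` equipped with its default orientation `k+1 → k+2`. -/
def thetaRight (n k : ℕ) : Bool :=
  ! inLeft (pos n (k + 1)) (pos n (k + 2)) (pos n k)

/-- The positive ordering on the triangles `θ_i` of the zig-zag triangulation
(with the default orientation), as a `Bool`-valued "comes before" relation: for
`i < j`, `θ_i` comes first iff `θ_i` is to the right of the oriented diagonal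
separating `θ_i` from `θ_{i+1}`. -/
def posBefore (n i j : ℕ) : Bool :=
  if i < j then thetaRight n i else if j < i then ! thetaRight n j else true

/-- Insertion into a sorted list (used to reorder the odd factors of a weight
into the positive ordering). -/
def insB {α : Type*} (le : α → α → Bool) (x : α) : List α → List α
  | [] => [x]
  | y :: t => if le x y then x :: y :: t else y :: insB le x t

/-- Insertion sort along a `Bool`-valued "comes before" relation. -/
def sortB {α : Type*} (le : α → α → Bool) : List α → List α
  | [] => []
  | x :: t => insB le x (sortB le t)

/-- Edges of the zig-zag triangulation (including boundary edges): the pairs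
`{u, u+1}` and `{u, u+2}` with all labels in `{1, …, n}`. -/
def ZEdge (n u v : ℕ) : Prop :=
  1 ≤ u ∧ u ≤ n ∧ 1 ≤ v ∧ v ≤ n ∧
    (v = u + 1 ∨ u = v + 1 ∨ v = u + 2 ∨ u = v + 2)

/-- Vertices of the auxiliary graph for the arc `(j₀, n)`: `Sum.inl u` is the
polygon vertex labelled `u`, and `Sum.inr i` is the internal vertex `θ_i` placed
in the face `(i, i+1, i+2)` (for `j₀ ≤ i ≤ n-2`, the faces crossed by the
arc). -/
abbrev V := ℕ ⊕ ℕ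

/-- Adjacency in the auxiliary graph of the zig-zag triangulation for the arc
`(j₀, n)`: edges of the triangulation, `σ`-edges `σ_i = (θ_i, i+1)` joining each
internal vertex to its fan center `i+1`, and `τ`-edges `τ_{ij} = (θ_i, θ_j)`. -/
def ZJoins (n j0 : ℕ) : V → V → Prop
  | Sum.inl u, Sum.inl v => ZEdge n u v
  | Sum.inl u, Sum.inr i => u = i + 1 ∧ j0 ≤ i ∧ i + 2 ≤ n
  | Sum.inr i, Sum.inl u => u = i + 1 ∧ j0 ≤ i ∧ i + 2 ≤ n
  | Sum.inr i, Sum.inr i' => i ≠ i' ∧ j0 ≤ i ∧ i + 2 ≤ n ∧ j0 ≤ i' ∧ i' + 2 ≤ n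

/-- `ZCrossPos n j0 e m` : the auxiliary edge with endpoint pair `e` crosses the
arc `(j₀, n)`, the crossing occurring at linear position `m` along the arc:
diagonals `(w, w+1)` with `j₀+1 ≤ w ≤ n-2` at position `2w`, and `σ`-edges
`σ_i` at position `2i+1`; `τ`-edges and boundary edges do not cross. -/
def ZCrossPos (n j0 : ℕ) : V × V → ℕ → Prop
  | (Sum.inl u, Sum.inl v), m =>
      ∃ w, ((u = w ∧ v = w + 1) ∨ (v = w ∧ u = w + 1)) ∧
        j0 + 1 ≤ w ∧ w + 2 ≤ n ∧ m = 2 * w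
  | (Sum.inl _, Sum.inr i), m => m = 2 * i + 1
  | (Sum.inr i, Sum.inl _), m => m = 2 * i + 1
  | (Sum.inr _, Sum.inr _), _ => False

/-- The endpoint pair is a `σ`-edge. -/
def isSig : V × V → Prop
  | (Sum.inl _, Sum.inr _) => True
  | (Sum.inr _, Sum.inl _) => True
  | _ => False

/-- The endpoint pair is a `τ`-edge. -/
def isTau : V × V → Prop
  | (Sum.inr _, Sum.inr _) => True
  | _ => False

/-- Equality of auxiliary edges, as unordered pairs of endpoints. -/
def pairEqV (p q : V × V) : Prop :=
  (p.1 = q.1 ∧ p.2 = q.2) ∨ (p.1 = q.2 ∧ p.2 = q.1)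

/-- A super `T`-path in the zig-zag triangulation of the `n`-gon, along the arc
`(j₀, n)`; if `rev = false` it goes from `j₀` to `n`, and if `rev = true` from
`n` to `j₀` (so that the crossing positions must decrease).  The axioms are
(T1)–(T7) of Definition 5.3 of the paper:  a sequence of vertices of the
auxiliary graph joined by pairwise distinct edges, of odd length, with
even-numbered edges crossing the arc (`σ`-edges counting as crossing),
`σ`-edges only at even and `τ`-edges only at odd positions, and crossings
occurring in order from the starting vertex. -/
structure SuperTPath (n j0 : ℕ) (rev : Bool) where
  len : ℕ
  vert : Fin (len + 1) → V
  odd_len : Odd len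
  first_eq : vert 0 = Sum.inl (if rev then n else j0)
  last_eq : vert (Fin.last len) = Sum.inl (if rev then j0 else n)
  joins : ∀ i : Fin len, ZJoins n j0 (vert i.castSucc) (vert i.succ)
  edges_distinct : ∀ i i' : Fin len, i ≠ i' →
    ¬ pairEqV (vert i.castSucc, vert i.succ) (vert i'.castSucc, vert i'.succ)
  even_cross : ∀ i : Fin len, Odd i.val →
    ∃ m, ZCrossPos n j0 (vert i.castSucc, vert i.succ) m
  sig_even : ∀ i : Fin len, isSig (vert i.castSucc, vert i.succ) → Odd i.val
  tau_odd : ∀ i : Fin len, isTau (vert i.castSucc, vert i.succ) → Even i.val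
  cross_mono : ∀ i i' : Fin len, i < i' → ∀ m m',
    ZCrossPos n j0 (vert i.castSucc, vert i.succ) m →
    ZCrossPos n j0 (vert i'.castSucc, vert i'.succ) m' →
    (if rev then m' < m else m < m')

variable {A : Type*} [Ring A]

/-- `λ`-length of an edge, with the endpoints sorted. -/
def lamE (lam : ℕ → ℕ → A) (u v : ℕ) : A := lam (min u v) (max u v)

/-- The even (scalar) part of the weight of the `k`-th step of a super `T`-path
(steps numbered from `0`; the step is an odd step of the path iff `k` is even):
an edge of the triangulation contributes its `λ`-length at odd steps and the
inverse of its `λ`-length at even steps, a `σ`-edge `σ_i` contributes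
`√(λ_{i,i+2}/(λ_{i,i+1}λ_{i+1,i+2}))`, and a `τ`-edge contributes `1`. -/
noncomputable def stepWt (lam : ℕ → ℕ → A) (sqrt : A → A) (k : ℕ) : V × V → A
  | (Sum.inl u, Sum.inl v) =>
      if k % 2 = 0 then lamE lam u v else Ring.inverse (lamE lam u v)
  | (Sum.inl _, Sum.inr i) =>
      sqrt (lamE lam i (i + 2) *
        Ring.inverse (lamE lam i (i + 1) * lamE lam (i + 1) (i + 2)))
  | (Sum.inr i, Sum.inl _) =>
      sqrt (lamE lam i (i + 2) *
        Ring.inverse (lamE lam i (i + 1) * lamE lam (i + 1) (i + 2)))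
  | (Sum.inr _, Sum.inr _) => 1

/-- The index of the face whose `σ`-edge is used at a given step, if any. -/
def sigIdx : V × V → Option ℕ
  | (Sum.inl _, Sum.inr i) => some i
  | (Sum.inr i, Sum.inl _) => some i
  | _ => none

/-- The weight of a super `T`-path: the ordered product of the even parts of the
step weights, times the product of the odd `μ`-invariants `θ_i` of the faces
whose `σ`-edges are used, taken in the positive ordering. -/
noncomputable def wt (n : ℕ) (lam : ℕ → ℕ → A) (θ : ℕ → A) (sqrt : A → A)
    {j0 : ℕ} {rev : Bool} (t : SuperTPath n j0 rev) : A :=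
  ((List.finRange t.len).map
      (fun i => stepWt lam sqrt i.val (t.vert i.castSucc, t.vert i.succ))).prod *
  ((sortB (posBefore n)
      ((List.finRange t.len).filterMap
        (fun i => sigIdx (t.vert i.castSucc, t.vert i.succ)))).map θ).prod

/-- The weight of the `σ`-edge `σ_i` (including its odd factor `θ_i`). -/
noncomputable def sigWt (lam : ℕ → ℕ → A) (θ : ℕ → A) (sqrt : A → A) (i : ℕ) : A :=
  sqrt (lamE lam i (i + 2) *
    Ring.inverse (lamE lam i (i + 1) * lamE lam (i + 1) (i + 2))) * θ i

/-! A super `T`-path from `k` to `n` is read from left to right by an automaton with three kinds of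
states.  Its transitions give a recursion in `k` for the sums of the weights, in which a pair of
`σ`-edges `σ_k, σ_j` contributes `σ_k σ_j θ_k θ_j`, up to order, times the sum for `j + 1`.

On the other side, the recursion for the `μ`-invariants telescopes to
`√λ_{k,n} √λ_{k+1,n} [k,k+1,n] = √λ_{k,k+1} Σ_{j ≥ k} σ_j λ_{j+1,n} θ_j`.
Substituting this into the super Ptolemy relation for `λ_{k,n}` gives the same recursion, and the
initial values agree. -/

/-! ### Super `T`-paths as walks of an automaton -/

/-- The steps of a vertex list: its pairs of consecutive vertices. -/
def edges (l : List V) : List (V × V) := l.zip l.tail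

lemma edges_cons {a b : V} {l : List V} (h : l.head? = some b) :
    edges (a :: l) = (a, b) :: edges l := by
  obtain ⟨l', rfl⟩ := List.head?_eq_some_iff.1 h
  rfl

lemma edges_ofFn {m : ℕ} (f : Fin (m + 1) → V) :
    edges (List.ofFn f) = List.ofFn fun i : Fin m => (f i.castSucc, f i.succ) :=
  List.ext_getElem (by simp [edges]) (by simp [edges, -List.ofFn_succ])

lemma getLast?_ofFn {m : ℕ} (f : Fin (m + 1) → V) :
    (List.ofFn f).getLast? = some (f (Fin.last m)) := by
  rw [List.getLast?_eq_some_getLast (by simp), List.getLast_ofFn_succ]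

lemma mem_of_mem_edges {l : List V} {e : V × V} (h : e ∈ edges l) : e.1 ∈ l ∧ e.2 ∈ l :=
  (List.of_mem_zip (a := e.1) (b := e.2) h).imp_right List.mem_of_mem_tail

lemma not_pairEqV_of_notMem {l : List V} {a b : V} (ha : a ∉ l) :
    ∀ e ∈ edges l, ¬ pairEqV (a, b) e := by
  rintro e he (⟨rfl, -⟩ | ⟨rfl, -⟩)
  · exact ha (mem_of_mem_edges he).1
  · exact ha (mem_of_mem_edges he).2

lemma zEdge_succ {n u : ℕ} (hu : 1 ≤ u) (hn : u + 1 ≤ n) : ZEdge n u (u + 1) := by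
  unfold ZEdge
  omega

lemma zEdge_add_two {n u : ℕ} (hu : 1 ≤ u) (hn : u + 2 ≤ n) : ZEdge n u (u + 2) := by
  unfold ZEdge
  omega

lemma ZEdge.symm {n u v : ℕ} (h : ZEdge n u v) : ZEdge n v u := by
  unfold ZEdge at *
  omega

/-- The conditions of Definition 5.3 on a single step of a super `T`-path; only the parity of its
number `p` matters, steps being numbered from `0`. -/
def StepOK (n j0 p : ℕ) (e : V × V) : Prop :=
  ZJoins n j0 e.1 e.2 ∧ (Odd p → ∃ m, ZCrossPos n j0 e m) ∧
    (isSig e → Odd p) ∧ (isTau e → Even p)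

lemma StepOK.of_odd {n j0 p m : ℕ} {a b : V} (hj : ZJoins n j0 a b)
    (hc : ZCrossPos n j0 (a, b) m) (ht : ¬ isTau (a, b)) (hp : Odd p) : StepOK n j0 p (a, b) :=
  ⟨hj, fun _ => ⟨m, hc⟩, fun _ => hp, fun h => absurd h ht⟩

lemma StepOK.of_even {n j0 p : ℕ} {a b : V} (hj : ZJoins n j0 a b) (hs : ¬ isSig (a, b))
    (hp : Even p) : StepOK n j0 p (a, b) :=
  ⟨hj, fun h => absurd hp (Nat.not_even_iff_odd.2 h), fun h => absurd h hs, fun _ => hp⟩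

/-- The conditions on the steps of a final segment of a super `T`-path whose first step is the one
numbered `p`; the base case says that the total number of steps is odd. -/
def StepsOK (n j0 : ℕ) : ℕ → List (V × V) → Prop
  | p, [] => Odd p
  | p, e :: es => StepOK n j0 p e ∧ StepsOK n j0 (p + 1) es

lemma stepsOK_add_two {n j0 p : ℕ} {es : List (V × V)} :
    StepsOK n j0 (p + 2) es ↔ StepsOK n j0 p es := by
  induction es generalizing p with
  | nil => simp [StepsOK, parity_simps]
  | cons e es ih =>
    simp only [StepsOK, StepOK, Nat.odd_add, Nat.even_add, show p + 2 + 1 = p + 1 + 2 by ring, ih]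
    simp

lemma stepsOK_ofFn {n j0 m p : ℕ} (g : Fin m → V × V) :
    StepsOK n j0 p (List.ofFn g) ↔ (∀ i : Fin m, StepOK n j0 (p + i) (g i)) ∧ Odd (p + m) := by
  induction m generalizing p with
  | zero => simp [StepsOK]
  | succ m ih =>
    rw [List.ofFn_succ, StepsOK, ih, Fin.forall_fin_succ, and_assoc]
    simp [add_assoc, add_comm 1]

/-- The order condition on two steps: crossings of `e` come before crossings of `e'`. -/
def Ahead (n j0 : ℕ) (e e' : V × V) : Prop :=
  ∀ m m', ZCrossPos n j0 e m → ZCrossPos n j0 e' m' → m < m'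

/-- The height of a vertex of the auxiliary graph, on the scale of the crossing positions. -/
def rank : V → ℕ
  | Sum.inl v => 2 * v
  | Sum.inr i => 2 * i + 1

lemma rank_eq_of_zCrossPos {n j0 m : ℕ} {e : V × V} (h : ZCrossPos n j0 e m) :
    rank e.1 = m ∨ rank e.2 = m := by
  rcases e with ⟨a | a, b | b⟩ <;> simp only [ZCrossPos, rank] at * <;> grind

lemma zCrossPos_succ_iff {n j0 u m : ℕ} :
    ZCrossPos n j0 (Sum.inl u, Sum.inl (u + 1)) m ↔ j0 + 1 ≤ u ∧ u + 2 ≤ n ∧ m = 2 * u := by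
  grind [ZCrossPos]

lemma zCrossPos_of_two_mul {n j0 k : ℕ} {e : V × V} (h : ZCrossPos n j0 e (2 * k)) :
    ZCrossPos n j0 (Sum.inl k, Sum.inl (k + 1)) (2 * k) := by
  rw [zCrossPos_succ_iff]
  rcases e with ⟨a | a, b | b⟩ <;> simp only [ZCrossPos] at h <;> grind

lemma two_mul_le_of_zCrossPos {n j0 m : ℕ} {a b : V} (hj : ZJoins n j0 a b)
    (hm : ZCrossPos n j0 (a, b) m) : 2 * j0 ≤ m := by
  rcases a with a | a <;> rcases b with b | b <;> simp only [ZJoins, ZCrossPos] at * <;> grind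

/-- The situation of a super `T`-path after a step: `free k` at the vertex `k` before an odd step;
`near u` at the vertex `u + 1` before an even step, with only crossings after `(u, u + 1)` left;
`far u` at the vertex `u + 2` before an even step, with `(u + 1, u + 2)` still available. -/
inductive State
  | free (k : ℕ)
  | near (u : ℕ)
  | far (u : ℕ)

namespace State

/-- The parameter of a state. -/
def idx : State → ℕ
  | free k => k
  | near u => u
  | far u => u

/-- The parity of the number of the next step. -/
def parity : State → ℕ
  | free _ => 0
  | near _ => 1
  | far _ => 1

/-- The label of the current vertex. -/
def vertex : State → ℕ
  | free k => k
  | near u => u + 1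
  | far u => u + 2

/-- A lower bound for the rank of the vertices that can still be visited. -/
def bound : State → ℕ
  | free k => 2 * k
  | near u => 2 * u + 1
  | far u => 2 * u + 2

/-- The crossing positions not yet excluded by the earlier steps of a path that is in this
state. -/
def Allows : State → ℕ → Prop
  | free k, m => 2 * k ≤ m + 1
  | near u, m => 2 * u ≤ m + 1 ∧ m ≠ 2 * u
  | far u, m => 2 * u ≤ m + 1

end State

open State

/-- The vertex lists of the final segments of super `T`-paths ending at `n`, described by a
transition system on `State`. -/
inductive Walk (n : ℕ) : State → List V → Prop
  | free_near {k l} : Walk n (near k) l → Walk n (free k) (Sum.inl k :: l)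
  | free_far {k l} : Walk n (far k) l → Walk n (free k) (Sum.inl k :: l)
  | near_end {u} : u + 1 = n → Walk n (near u) [Sum.inl (u + 1)]
  | near_up {u l} : Walk n (free (u + 2)) l → Walk n (near u) (Sum.inl (u + 1) :: l)
  | near_inner {u j l} : u < j → Walk n (free (j + 1)) l →
      Walk n (near u) (Sum.inl (u + 1) :: Sum.inr u :: Sum.inr j :: l)
  | far_near {u l} : Walk n (near (u + 1)) l → Walk n (far u) l
  | far_down {u l} : Walk n (far (u + 1)) l →
      Walk n (far u) (Sum.inl (u + 2) :: Sum.inl (u + 1) :: l)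

/-- The set of vertex lists that lead from a state to the vertex `n`. -/
def walks (n : ℕ) (s : State) : Set (List V) := {l | Walk n s l}

namespace Walk

variable {n : ℕ} {s : State} {l : List V}

lemma head? (h : Walk n s l) : l.head? = some (Sum.inl s.vertex) := by
  induction h <;> simp_all [vertex]

lemma getLast? (h : Walk n s l) : l.getLast? = some (Sum.inl n) := by
  induction h <;> simp_all [List.getLast?_cons]

lemma edges_cons (h : Walk n s l) (a : V) : edges (a :: l) = (a, Sum.inl s.vertex) :: edges l :=
  ZigZag.edges_cons h.head?

lemma edges_cons_cons (h : Walk n s l) (a b : V) :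
    edges (a :: b :: l) = (a, b) :: (b, Sum.inl s.vertex) :: edges l := by
  rw [← h.edges_cons]
  rfl

lemma edges_cons_cons_cons (h : Walk n s l) (a b c : V) :
    edges (a :: b :: c :: l) = (a, b) :: (b, c) :: (c, Sum.inl s.vertex) :: edges l := by
  rw [← h.edges_cons_cons]
  rfl

lemma idx_lt (h : Walk n s l) : s.idx < n := by
  induction h <;> simp only [idx] at * <;> omega

lemma vertex_le (h : Walk n s l) : s.vertex ≤ n := by
  cases h with
  | near_end h => exact h.le
  | free_near h | free_far h | far_near h | far_down h | near_up h | near_inner _ h =>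
    have := h.idx_lt
    simp only [idx, vertex] at *
    omega

lemma stepsOK {j0 : ℕ} (h0 : 1 ≤ j0) (h : Walk n s l) (hj : j0 ≤ s.idx) :
    StepsOK n j0 s.parity (edges l) := by
  induction h with
  | free_near h ih =>
    rw [h.edges_cons]
    exact ⟨.of_even (zEdge_succ (h0.trans hj) h.vertex_le) id .zero, ih hj⟩
  | free_far h ih =>
    rw [h.edges_cons]
    exact ⟨.of_even (zEdge_add_two (h0.trans hj) h.vertex_le) id .zero, ih hj⟩
  | near_end => exact odd_one
  | @near_up u l h ih =>
    have := h.idx_lt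
    simp only [idx] at *
    rw [h.edges_cons]
    exact ⟨.of_odd (zEdge_succ (by omega) (by omega))
      (zCrossPos_succ_iff.2 ⟨by omega, by omega, rfl⟩) id odd_one,
      stepsOK_add_two.2 (ih (by omega))⟩
  | @near_inner u j l hu h ih =>
    have := h.idx_lt
    simp only [idx] at *
    rw [h.edges_cons_cons_cons]
    exact ⟨.of_odd ⟨rfl, by omega, by omega⟩ rfl id odd_one,
      .of_even ⟨hu.ne, by omega⟩ id even_two,
      .of_odd ⟨rfl, by omega, by omega⟩ rfl id even_two.add_one,
      stepsOK_add_two.2 <| stepsOK_add_two.2 (ih (by omega))⟩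
  | far_near _ ih => exact ih (by simp only [idx] at *; omega)
  | @far_down u l h ih =>
    have := h.vertex_le
    simp only [idx, vertex] at *
    rw [h.edges_cons_cons]
    exact ⟨.of_odd (zEdge_succ (by omega) (by omega)).symm
      ⟨u + 1, .inr ⟨rfl, rfl⟩, by omega, by omega, rfl⟩ id odd_one,
      .of_even (zEdge_add_two (by omega) this) id even_two,
      stepsOK_add_two.2 (ih (by omega))⟩

lemma bound_le_rank (h : Walk n s l) : ∀ a ∈ l, s.bound ≤ rank a := by
  induction h <;> simp only [List.forall_mem_cons, bound, rank, List.not_mem_nil] at * <;> grind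

lemma notMem_of_rank_lt (h : Walk n s l) {a : V} (ha : rank a < s.bound) : a ∉ l :=
  fun hm => ha.not_ge (h.bound_le_rank a hm)

lemma bound_le_of_zCrossPos (h : Walk n s l) {j0 : ℕ} :
    ∀ e ∈ edges l, ∀ m, ZCrossPos n j0 e m → s.bound ≤ m := by
  intro e he m hm
  obtain ⟨h1, h2⟩ := mem_of_mem_edges he
  rcases rank_eq_of_zCrossPos hm with rfl | rfl
  · exact h.bound_le_rank _ h1
  · exact h.bound_le_rank _ h2

lemma pairwise_ahead (h : Walk n s l) {j0 : ℕ} : (edges l).Pairwise (Ahead n j0) := by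
  induction h with
  | free_near h ih | free_far h ih | near_up h ih | near_inner _ h ih | far_down h ih =>
    have := h.bound_le_of_zCrossPos (j0 := j0)
    simp only [h.edges_cons, h.edges_cons_cons, h.edges_cons_cons_cons, List.pairwise_cons,
      List.forall_mem_cons, Ahead, ZCrossPos, vertex, bound] at *
    grind
  | far_near _ ih => exact ih
  | near_end => simp [edges]

lemma pairwise_not_pairEqV (h : Walk n s l) :
    (edges l).Pairwise fun e e' => ¬ pairEqV e e' := by
  induction h with
  | free_near h ih | free_far h ih | near_up h ih =>
    rw [h.edges_cons, List.pairwise_cons]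
    exact ⟨not_pairEqV_of_notMem (h.notMem_of_rank_lt (by simp [rank, bound])), ih⟩
  | near_end => simp [edges]
  | @near_inner u j l hu h ih =>
    have h1 : Sum.inl (u + 1) ∉ l := h.notMem_of_rank_lt (by simp [rank, bound, hu])
    have h2 : Sum.inr u ∉ l := h.notMem_of_rank_lt (by simp only [rank, bound]; omega)
    have h3 : Sum.inr j ∉ l := h.notMem_of_rank_lt (by simp only [rank, bound]; omega)
    simp only [h.edges_cons_cons_cons, List.pairwise_cons, List.forall_mem_cons]
    refine ⟨⟨?_, ?_, not_pairEqV_of_notMem h1⟩, ⟨?_, not_pairEqV_of_notMem h2⟩,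
      not_pairEqV_of_notMem h3, ih⟩ <;> simp [pairEqV, hu.ne]
  | far_near _ ih => exact ih
  | @far_down u l h ih =>
    have hm : Sum.inl (u + 1) ∉ l := h.notMem_of_rank_lt (by simp [rank, bound])
    simp only [h.edges_cons_cons, List.pairwise_cons, List.forall_mem_cons]
    refine ⟨⟨by simp [pairEqV, vertex], fun e he hp => ?_⟩, not_pairEqV_of_notMem hm, ih⟩
    exact not_pairEqV_of_notMem (b := Sum.inl (u + 2)) hm e he (hp.symm.imp And.symm And.symm)

end Walk

/-- The list form of the conditions on the final segment of a super `T`-path that starts with the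
step numbered `p` and whose crossings all occur at positions satisfying `B`. -/
structure IsSegment (n j0 p : ℕ) (B : ℕ → Prop) (l : List V) : Prop where
  steps : StepsOK n j0 p (edges l)
  ahead : (edges l).Pairwise (Ahead n j0)
  last : l.getLast? = some (Sum.inl n)
  bound : ∀ e ∈ edges l, ∀ m, ZCrossPos n j0 e m → B m

namespace IsSegment

variable {n j0 p : ℕ} {B B' : ℕ → Prop} {a b : V} {l : List V}

lemma step (h : IsSegment n j0 p B (a :: b :: l)) : StepOK n j0 p (a, b) := h.steps.1

lemma bound_step (h : IsSegment n j0 p B (a :: b :: l)) {m : ℕ} (hm : ZCrossPos n j0 (a, b) m) :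
    B m := h.bound _ (by simp [edges]) m hm

lemma mono (h : IsSegment n j0 p B l) (hB : ∀ m, B m → B' m) : IsSegment n j0 p B' l :=
  { h with bound := fun e he m hm => hB m (h.bound e he m hm) }

lemma tail (h : IsSegment n j0 p B (a :: b :: l)) : IsSegment n j0 (p + 1) B (b :: l) where
  steps := h.steps.2
  ahead := (List.pairwise_cons.1 h.ahead).2
  last := by simpa using h.last
  bound := fun e he => h.bound e (List.mem_cons_of_mem _ he)

lemma crossing_tail (h : IsSegment n j0 p B (a :: b :: l)) {c : ℕ}
    (hc : ZCrossPos n j0 (a, b) c) :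
    IsSegment n j0 (p + 1) (fun m => B m ∧ c < m) (b :: l) :=
  { h.tail with
    bound := fun e he m hm =>
      ⟨h.tail.bound e he m hm, (List.pairwise_cons.1 h.ahead).1 e he c m hc hm⟩ }

lemma parity (h : IsSegment n j0 (p + 2) B l) : IsSegment n j0 p B l :=
  { h with steps := stepsOK_add_two.1 h.steps }

lemma false_of_vertex_behind {z : ℕ} (h : IsSegment n j0 1 B (Sum.inl z :: l)) (hz : z < n)
    (hB : ∀ m, B m → 2 * z < m) : False := by
  rcases l with - | ⟨b, l⟩
  · obtain rfl : z = n := by simpa using h.last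
    exact hz.false
  · obtain ⟨m, hm⟩ := h.step.2.1 odd_one
    have hm' := hB m (h.bound_step hm)
    have hj := h.step.1
    rcases b with v | i <;> simp only [ZJoins, ZCrossPos] at * <;> grind

lemma exists_of_even_inl {u : ℕ} (h : IsSegment n j0 0 B (Sum.inl u :: l)) :
    ∃ v l', l = Sum.inl v :: l' ∧ ZEdge n u v := by
  rcases l with - | ⟨v | i, l⟩
  · exact absurd h.steps Nat.not_odd_zero
  · exact ⟨v, l, rfl, h.step.1⟩
  · exact absurd (h.step.2.2.1 trivial) Nat.not_odd_zero

lemma exists_of_odd_inr {i : ℕ} (h : IsSegment n j0 1 B (Sum.inl (i + 1) :: Sum.inr i :: l)) :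
    ∃ j l', l = Sum.inr j :: Sum.inl (j + 1) :: l' ∧ i < j ∧
      IsSegment n j0 0 (fun m => B m ∧ 2 * j + 1 < m) (Sum.inl (j + 1) :: l') := by
  have h1 := h.crossing_tail rfl
  rcases l with - | ⟨v | j, l⟩
  · exact absurd h1.steps (by decide : ¬ Odd 2)
  · exact absurd (h1.step.2.2.1 trivial) (by decide)
  have h2 := h1.tail.parity
  rcases l with - | ⟨v | j', l⟩
  · simpa using h2.last
  · obtain ⟨rfl, -⟩ := h2.step.1
    have hij := h2.bound_step (m := 2 * j + 1) rfl
    exact ⟨j, l, rfl, by omega, (h2.crossing_tail rfl).parity.mono fun m hm => ⟨hm.1.1, hm.2⟩⟩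
  · exact absurd (h2.step.2.2.2 trivial) (by decide)

lemma cases_of_odd_inl {u : ℕ} (h : IsSegment n j0 1 B (Sum.inl u :: l)) :
    (u = n ∧ l = []) ∨
      (∃ l', l = Sum.inl (u + 1) :: l' ∧
        IsSegment n j0 0 (fun m => B m ∧ 2 * u < m) (Sum.inl (u + 1) :: l')) ∨
      (∃ w l', u = w + 1 ∧ l = Sum.inl w :: l' ∧ j0 + 1 ≤ w ∧ w + 2 ≤ n ∧ B (2 * w) ∧
        IsSegment n j0 0 (fun m => B m ∧ 2 * w < m) (Sum.inl w :: l')) ∨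
      ∃ i j l', u = i + 1 ∧ l = Sum.inr i :: Sum.inr j :: Sum.inl (j + 1) :: l' ∧ i < j ∧
        B (2 * i + 1) ∧
          IsSegment n j0 0 (fun m => B m ∧ 2 * j + 1 < m) (Sum.inl (j + 1) :: l') := by
  rcases l with - | ⟨v | i, l⟩
  · left
    simpa using h.last
  · obtain ⟨m, hm⟩ := h.step.2.1 odd_one
    have ht := (h.crossing_tail hm).parity
    have hB := h.bound_step hm
    obtain ⟨w, ⟨rfl, rfl⟩ | ⟨rfl, rfl⟩, hw, hwn, rfl⟩ := hm
    · exact .inr <| .inl ⟨l, rfl, ht⟩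
    · exact .inr <| .inr <| .inl ⟨v, l, rfl, rfl, hw, hwn, hB, ht⟩
  · obtain ⟨rfl, -⟩ := h.step.1
    obtain ⟨j, l', rfl, hij, ht⟩ := h.exists_of_odd_inr
    exact .inr <| .inr <| .inr ⟨i, j, l', rfl, rfl, hij, h.bound_step rfl, ht⟩

section Walk

variable {l : List V}
  (ih : ∀ (s : State) (l' : List V), l'.length < l.length → j0 ≤ s.idx →
    IsSegment n j0 s.parity s.Allows (Sum.inl s.vertex :: l') →
      Walk n s (Sum.inl s.vertex :: l'))
include ih

lemma walk_near {u : ℕ} (hu : j0 ≤ u)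
    (h : IsSegment n j0 1 (near u).Allows (Sum.inl (u + 1) :: l)) :
    Walk n (near u) (Sum.inl (u + 1) :: l) := by
  rcases h.cases_of_odd_inl with ⟨rfl, rfl⟩ | ⟨l', rfl, ht⟩ |
    ⟨w, l', hw, rfl, -, -, hB, -⟩ | ⟨i, j, l', hi, rfl, hij, -, ht⟩
  · exact .near_end rfl
  · exact .near_up <| ih (free (u + 2)) l' (by simp) (by simp only [idx]; omega)
      (ht.mono fun m hm => by simp only [Allows]; omega)
  · simp only [Allows] at hB
    omega
  · obtain rfl : u = i := by omega
    exact .near_inner hij <| ih (free (j + 1)) l' (by simp only [List.length_cons]; omega)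
      (by simp only [idx]; omega)
      (ht.mono fun m hm => by simp only [Allows]; omega)

lemma walk_far_down {u : ℕ} (hu : j0 ≤ u) (hn : u + 3 ≤ n)
    (h : IsSegment n j0 0 (fun m => 2 * u + 2 < m) (Sum.inl (u + 1) :: l)) :
    Walk n (far u) (Sum.inl (u + 2) :: Sum.inl (u + 1) :: l) := by
  obtain ⟨v, l', rfl, hv⟩ := h.exists_of_even_inl
  obtain hv' | rfl | rfl : v ≤ u ∨ v = u + 2 ∨ v = u + 3 := by
    simp only [ZEdge] at hv
    omega
  · exact (h.tail.false_of_vertex_behind (by omega) (by omega)).elim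
  · exact absurd (h.bound_step (zCrossPos_succ_iff.2 ⟨by omega, by omega, rfl⟩)) (by omega)
  · exact .far_down <| ih (far (u + 1)) l' (by simp) (by simp only [idx]; omega)
      (h.tail.mono fun m hm => by simp only [Allows]; omega)

lemma walk_far {u : ℕ} (hu : j0 ≤ u)
    (h : IsSegment n j0 1 (far u).Allows (Sum.inl (u + 2) :: l)) :
    Walk n (far u) (Sum.inl (u + 2) :: l) := by
  rcases h.cases_of_odd_inl with ⟨rfl, rfl⟩ | ⟨l', rfl, ht⟩ |
    ⟨w, l', hw, rfl, -, hwn, -, ht⟩ | ⟨i, j, l', hi, rfl, hij, -, ht⟩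
  · exact .far_near (.near_end rfl)
  · exact .far_near <| .near_up <| ih (free (u + 3)) l' (by simp) (by simp only [idx]; omega)
      (ht.mono fun m hm => by simp only [Allows]; omega)
  · obtain rfl : w = u + 1 := by omega
    exact walk_far_down (fun s l'' hl => ih s l'' (hl.trans (by simp))) hu hwn
      (ht.mono fun m hm => by omega)
  · obtain rfl : i = u + 1 := by omega
    exact .far_near <| .near_inner hij <| ih (free (j + 1)) l'
      (by simp only [List.length_cons]; omega) (by simp only [idx]; omega)
      (ht.mono fun m hm => by simp only [Allows]; omega)

lemma walk_free {k : ℕ} (hk : j0 ≤ k)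
    (h : IsSegment n j0 0 (free k).Allows (Sum.inl k :: l)) :
    Walk n (free k) (Sum.inl k :: l) := by
  obtain ⟨v, l', rfl, hv⟩ := h.exists_of_even_inl
  obtain hv' | rfl | rfl : v + 1 ≤ k ∨ v = k + 1 ∨ v = k + 2 := by
    simp only [ZEdge] at hv
    omega
  · simp only [ZEdge] at hv
    refine (h.tail.false_of_vertex_behind (by omega) fun m hm => ?_).elim
    simp only [Allows] at hm
    omega
  · refine .free_near <| ih (near k) l' (by simp) hk
      { h.tail with bound := fun e he m hm => ⟨h.tail.bound e he m hm, ?_⟩ }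
    rintro rfl
    have hc := zCrossPos_of_two_mul hm
    exact lt_irrefl _ ((h.crossing_tail hc).bound e he _ hm).2
  · exact .free_far <| ih (far k) l' (by simp) hk h.tail

end Walk

lemma walk (s : State) (l : List V) (hs : j0 ≤ s.idx)
    (h : IsSegment n j0 s.parity s.Allows (Sum.inl s.vertex :: l)) :
    Walk n s (Sum.inl s.vertex :: l) :=
  match s with
  | free _ => walk_free (fun s l' _ => walk s l') hs h
  | near _ => walk_near (fun s l' _ => walk s l') hs h
  | far _ => walk_far (fun s l' _ => walk s l') hs h
termination_by l.length

end IsSegment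

namespace SuperTPath

variable {n k : ℕ} {rev : Bool}

/-- The list of vertices of a super `T`-path. -/
def toList (t : SuperTPath n k rev) : List V := List.ofFn t.vert

lemma toList_injective : Function.Injective (toList : SuperTPath n k rev → List V) := by
  rintro ⟨m, f, _⟩ ⟨m', f', _⟩ h
  obtain ⟨hm, hf⟩ := Sigma.mk.inj_iff.1 (List.ofFn_inj'.1 h)
  obtain rfl : m = m' := Nat.succ_injective hm
  simpa using hf

lemma edges_toList (t : SuperTPath n k rev) :
    edges t.toList = List.ofFn fun i : Fin t.len => (t.vert i.castSucc, t.vert i.succ) :=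
  edges_ofFn _

lemma isSegment_toList (t : SuperTPath n k false) :
    IsSegment n k 0 (free k).Allows t.toList where
  steps := by
    rw [edges_toList, stepsOK_ofFn]
    refine ⟨fun i => ?_, by simpa using t.odd_len⟩
    rw [zero_add]
    exact ⟨t.joins i, t.even_cross i, t.sig_even i, t.tau_odd i⟩
  ahead := by
    rw [edges_toList, List.pairwise_ofFn]
    intro i j hij m m' hm hm'
    simpa using t.cross_mono i j hij m m' hm hm'
  last := by
    rw [toList, getLast?_ofFn, t.last_eq]
    rfl
  bound := by
    rw [edges_toList, List.forall_mem_ofFn_iff]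
    exact fun i m hm => (two_mul_le_of_zCrossPos (t.joins i) hm).trans m.le_succ

lemma walk_toList (t : SuperTPath n k false) : Walk n (free k) t.toList := by
  have hl : t.toList = Sum.inl k :: t.toList.tail := by
    rw [toList, List.ofFn_succ, t.first_eq]
    simp
  have h := t.isSegment_toList
  rw [hl] at h ⊢
  exact IsSegment.walk (free k) _ le_rfl h

lemma exists_toList_eq (hk : 1 ≤ k) {l : List V} (h : Walk n (free k) l) :
    ∃ t : SuperTPath n k false, t.toList = l := by
  obtain ⟨m, f, rfl⟩ : ∃ m, ∃ f : Fin (m + 1) → V, l = List.ofFn f := by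
    obtain ⟨l, rfl⟩ := List.head?_eq_some_iff.1 h.head?
    exact ⟨l.length, (_ :: l).get, (List.ofFn_get _).symm⟩
  have hsteps := h.stepsOK hk le_rfl
  have hahead := h.pairwise_ahead (j0 := k)
  have hdistinct := h.pairwise_not_pairEqV
  have hlast := h.getLast?
  rw [edges_ofFn] at hsteps hahead hdistinct
  rw [stepsOK_ofFn] at hsteps
  rw [List.pairwise_ofFn] at hahead hdistinct
  rw [getLast?_ofFn] at hlast
  simp only [State.parity, zero_add] at hsteps
  refine ⟨⟨m, f, hsteps.2, by simpa [vertex] using h.head?, by simpa using hlast,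
    fun i => (hsteps.1 i).1, fun i j hij => ?_, fun i => (hsteps.1 i).2.1,
    fun i => (hsteps.1 i).2.2.1, fun i => (hsteps.1 i).2.2.2,
    fun i j hij => by simpa [Ahead] using hahead hij⟩, rfl⟩
  rcases lt_or_gt_of_ne hij with hlt | hlt
  · exact hdistinct hlt
  · exact fun hp => hdistinct hlt (by simpa only [pairEqV, eq_comm, and_comm] using hp)

lemma range_toList (hk : 1 ≤ k) :
    Set.range (toList : SuperTPath n k false → List V) = walks n (free k) :=
  Set.ext fun _ => ⟨by rintro ⟨t, rfl⟩; exact t.walk_toList, exists_toList_eq hk⟩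

end SuperTPath

/-! ### Weights -/

lemma perm_insB {α : Type*} (le : α → α → Bool) (x : α) (l : List α) :
    (insB le x l).Perm (x :: l) := by
  induction l with
  | nil => rfl
  | cons y l ih =>
    rw [insB]
    split
    · rfl
    · exact (ih.cons y).trans (.swap x y l)

lemma perm_sortB {α : Type*} (le : α → α → Bool) (l : List α) : (sortB le l).Perm l := by
  induction l with
  | nil => rfl
  | cons x l ih => exact (perm_insB le x _).trans (ih.cons x)

lemma insB_posBefore {n i : ℕ} {l : List ℕ} (hl : ∀ x ∈ l, i < x) :
    insB (posBefore n) i l = if thetaRight n i then i :: l else l ++ [i] := by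
  induction l with
  | nil => simp [insB]
  | cons y l ih =>
    rw [List.forall_mem_cons] at hl
    rw [insB, posBefore, if_pos hl.1, ih hl.2]
    split <;> simp

lemma sortB_posBefore_cons {n i : ℕ} {l : List ℕ} (hl : ∀ x ∈ l, i < x) :
    sortB (posBefore n) (i :: l) =
      if thetaRight n i then i :: sortB (posBefore n) l else sortB (posBefore n) l ++ [i] :=
  insB_posBefore fun x hx => hl x ((perm_sortB _ l).mem_iff.1 hx)

/-- The product of `θ i` and `x` in the order that the positive ordering prescribes for the
triangle `i` and later triangles; `x` stands for a product of `μ`-invariants of the latter. -/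
def orderedMul (n : ℕ) (θ : ℕ → A) (i : ℕ) (x : A) : A :=
  if thetaRight n i then θ i * x else x * θ i

/-- The product of the elements `θ i`, for `i` in the list `l`, in the positive ordering. -/
def oddWt (n : ℕ) (θ : ℕ → A) (l : List ℕ) : A := ((sortB (posBefore n) l).map θ).prod

section OddPart

variable {n i j : ℕ} {θ : ℕ → A} {l : List ℕ}

lemma orderedMul_mul {c : A} (hc : c ∈ Subring.center A) (x : A) :
    orderedMul n θ i (c * x) = c * orderedMul n θ i x := by
  unfold orderedMul
  split
  · rw [← mul_assoc, Subring.mem_center_iff.1 hc, mul_assoc]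
  · rw [mul_assoc]

lemma orderedMul_sum (s : Finset ℕ) (f : ℕ → A) :
    orderedMul n θ i (∑ j ∈ s, f j) = ∑ j ∈ s, orderedMul n θ i (f j) := by
  unfold orderedMul
  split
  · rw [Finset.mul_sum]
  · rw [Finset.sum_mul]

lemma oddWt_cons (hl : ∀ x ∈ l, i < x) :
    oddWt n θ (i :: l) = orderedMul n θ i (oddWt n θ l) := by
  rw [oddWt, sortB_posBefore_cons hl, orderedMul]
  split <;> simp [oddWt]

lemma mul_prod_map_of_anticommute {a : A} (h : ∀ x ∈ l, a * θ x = -(θ x * a)) :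
    a * (l.map θ).prod = (-1) ^ l.length * ((l.map θ).prod * a) := by
  induction l with
  | nil => simp
  | cons y l ih =>
    rw [List.forall_mem_cons] at h
    have hy : Commute (θ y) ((-1) ^ l.length) := ((Commute.one_right _).neg_right).pow_right _
    calc a * ((y :: l).map θ).prod
        = -(θ y * (a * (l.map θ).prod)) := by
          rw [List.map_cons, List.prod_cons, ← mul_assoc, h.1, neg_mul, mul_assoc]
      _ = -((-1) ^ l.length * (θ y * ((l.map θ).prod * a))) := by rw [ih h.2, hy.left_comm]
      _ = _ := by simp [pow_succ, mul_assoc]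

lemma commute_oddWt {a : A} (h : ∀ x ∈ l, a * θ x = -(θ x * a)) (hl : Even l.length) :
    Commute a (oddWt n θ l) := by
  have hp := perm_sortB (posBefore n) l
  have hcomm := mul_prod_map_of_anticommute fun x hx => h x (hp.mem_iff.1 hx)
  rwa [hp.length_eq, hl.neg_one_pow, one_mul] at hcomm

lemma oddWt_cons_cons (hij : i < j) (hl : ∀ x ∈ l, j < x)
    (hi : ∀ x ∈ l, θ i * θ x = -(θ x * θ i)) (hj : ∀ x ∈ l, θ j * θ x = -(θ x * θ j))
    (he : Even l.length) :
    oddWt n θ (i :: j :: l) = orderedMul n θ i (θ j) * oddWt n θ l := by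
  have hj' : oddWt n θ (j :: l) = θ j * oddWt n θ l := by
    rw [oddWt_cons hl, orderedMul, (commute_oddWt hj he).eq, ite_self]
  rw [oddWt_cons (List.forall_mem_cons.2 ⟨hij, fun x hx => hij.trans (hl x hx)⟩), hj']
  unfold orderedMul
  split
  · rw [mul_assoc]
  · rw [mul_assoc, mul_assoc, (commute_oddWt hi he).eq]

end OddPart

/-- The product of the scalar parts of the weights of the steps, numbered from `p` on. -/
noncomputable def scalarWt (lam : ℕ → ℕ → A) (sqrt : A → A) : ℕ → List (V × V) → A
  | _, [] => 1
  | p, e :: es => stepWt lam sqrt p e * scalarWt lam sqrt (p + 1) es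

/-- The indices of the faces whose `σ`-edges are used by a vertex list. -/
def faces (l : List V) : List ℕ := (edges l).filterMap sigIdx

/-- The weight of a vertex list whose first step is numbered `p`. -/
noncomputable def listWt (n : ℕ) (lam : ℕ → ℕ → A) (θ : ℕ → A) (sqrt : A → A) (p : ℕ)
    (l : List V) : A :=
  scalarWt lam sqrt p (edges l) * oddWt n θ (faces l)

section ListWt

variable {n : ℕ} {lam : ℕ → ℕ → A} {θ : ℕ → A} {sqrt : A → A}

lemma scalarWt_ofFn {m p : ℕ} (g : Fin m → V × V) :
    scalarWt lam sqrt p (List.ofFn g) =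
      ((List.finRange m).map fun i : Fin m => stepWt lam sqrt (p + i) (g i)).prod := by
  induction m generalizing p with
  | zero => simp [scalarWt]
  | succ m ih =>
    rw [List.ofFn_succ, scalarWt, ih, List.finRange_succ]
    simp [Function.comp_def, add_assoc, add_comm 1]

lemma SuperTPath.wt_eq_listWt {k : ℕ} {rev : Bool} (t : SuperTPath n k rev) :
    wt n lam θ sqrt t = listWt n lam θ sqrt 0 t.toList := by
  rw [wt, listWt, faces, edges_toList, scalarWt_ofFn, List.ofFn_eq_map, List.filterMap_map]
  simp only [zero_add]
  rfl

lemma scalarWt_add_two (p : ℕ) (es : List (V × V)) :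
    scalarWt lam sqrt (p + 2) es = scalarWt lam sqrt p es := by
  induction es generalizing p with
  | nil => rfl
  | cons e es ih =>
    rw [scalarWt, scalarWt, show p + 2 + 1 = p + 1 + 2 by ring, ih]
    congr 1
    rcases e with ⟨a | a, b | b⟩ <;> simp [stepWt]

lemma listWt_add_two (p : ℕ) (l : List V) :
    listWt n lam θ sqrt (p + 2) l = listWt n lam θ sqrt p l := by
  rw [listWt, scalarWt_add_two, listWt]

lemma listWt_cons {a b : V} {l : List V} (p : ℕ) (hl : l.head? = some b)
    (hab : sigIdx (a, b) = none) :
    listWt n lam θ sqrt p (a :: l) =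
      stepWt lam sqrt p (a, b) * listWt n lam θ sqrt (p + 1) l := by
  simp [listWt, faces, edges_cons hl, scalarWt, hab, mul_assoc]

end ListWt

lemma inr_mem_of_mem_faces {l : List V} {i : ℕ} (hi : i ∈ faces l) : Sum.inr i ∈ l := by
  obtain ⟨⟨a | a, b | b⟩, he, hei⟩ := List.mem_filterMap.1 hi <;>
    simp only [sigIdx, Option.some.injEq, reduceCtorEq] at hei <;> subst hei
  · exact (mem_of_mem_edges he).2
  · exact (mem_of_mem_edges he).1

namespace Walk

variable {n : ℕ} {s : State} {l : List V}

lemma add_two_le_of_mem_faces (h : Walk n s l) : ∀ i ∈ faces l, i + 2 ≤ n := by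
  suffices ∀ i, Sum.inr i ∈ l → i + 2 ≤ n from fun i hi => this i (inr_mem_of_mem_faces hi)
  induction h with
  | near_inner _ h ih =>
    have := h.idx_lt
    simp only [idx, List.mem_cons, reduceCtorEq, Sum.inr.injEq] at *
    grind
  | _ => simp_all

lemma bound_le_of_mem_faces (h : Walk n s l) {i : ℕ} (hi : i ∈ faces l) : s.bound ≤ 2 * i + 1 :=
  h.bound_le_rank _ (inr_mem_of_mem_faces hi)

lemma even_length_faces (h : Walk n s l) : Even (faces l).length := by
  induction h with
  | far_near _ ih => exact ih
  | near_end => simp [faces, edges]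
  | free_near h ih | free_far h ih | near_up h ih | near_inner _ h ih | far_down h ih =>
    simpa [faces, List.filterMap_cons, h.edges_cons, h.edges_cons_cons, h.edges_cons_cons_cons,
      sigIdx, parity_simps] using ih

end Walk

/-- `P` is a group of central units closed under the multiplicative choice `sqrt` of square
roots. -/
structure IsSqrtGroup (P : Set A) (sqrt : A → A) : Prop where
  mul_mem : ∀ p ∈ P, ∀ q ∈ P, p * q ∈ P
  inverse_mem : ∀ p ∈ P, Ring.inverse p ∈ P
  comm : ∀ p ∈ P, ∀ x : A, p * x = x * p
  isUnit : ∀ p ∈ P, IsUnit p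
  sqrt_mul_sqrt : ∀ p ∈ P, sqrt p * sqrt p = p
  sqrt_mem : ∀ p ∈ P, sqrt p ∈ P
  sqrt_mul : ∀ p ∈ P, ∀ q ∈ P, sqrt (p * q) = sqrt p * sqrt q

lemma IsSqrtGroup.mem_center {P : Set A} {sqrt : A → A} (hP : IsSqrtGroup P sqrt) (p : A)
    (hp : p ∈ P) : p ∈ Subring.center A :=
  Subring.mem_center_iff.2 fun x => (hP.comm p hp x).symm

/-- Decorated super coordinates on the zig-zag triangulation: `λ`-lengths of its edges in `P`, and
anticommuting `μ`-invariants of its triangles. -/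
structure IsDecoration (n : ℕ) (P : Set A) (lam : ℕ → ℕ → A) (θ : ℕ → A) : Prop where
  lam_mem : ∀ u v, u < v → ZEdge n u v → lam u v ∈ P
  anticomm : ∀ i j, 1 ≤ i → i < j → j + 2 ≤ n → θ i * θ j = -(θ j * θ i)

/-- The scalar part of the weight of the `σ`-edge of the triangle `i`. -/
noncomputable def sigScalar (lam : ℕ → ℕ → A) (sqrt : A → A) (i : ℕ) : A :=
  sqrt (lam i (i + 2) * Ring.inverse (lam i (i + 1) * lam (i + 1) (i + 2)))

namespace IsDecoration

variable {n : ℕ} {P : Set A} {sqrt : A → A} {lam : ℕ → ℕ → A} {θ : ℕ → A}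

lemma lam_succ_mem (hD : IsDecoration n P lam θ) {i : ℕ} (hi : 1 ≤ i) (hin : i + 1 ≤ n) :
    lam i (i + 1) ∈ P :=
  hD.lam_mem _ _ (by omega) (zEdge_succ hi hin)

lemma lam_add_two_mem (hD : IsDecoration n P lam θ) {i : ℕ} (hi : 1 ≤ i) (hin : i + 2 ≤ n) :
    lam i (i + 2) ∈ P :=
  hD.lam_mem _ _ (by omega) (zEdge_add_two hi hin)

lemma lamE_mem (hD : IsDecoration n P lam θ) {u v : ℕ} (h : ZEdge n u v) : lamE lam u v ∈ P := by
  unfold ZEdge at h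
  exact hD.lam_mem _ _ (by omega) (by unfold ZEdge; omega)

variable (hP : IsSqrtGroup P sqrt) (hD : IsDecoration n P lam θ)
include hP hD

lemma inverse_mul_lam {i : ℕ} (hi : 1 ≤ i) (hin : i + 1 ≤ n) :
    Ring.inverse (lam i (i + 1)) * lam i (i + 1) = 1 :=
  Ring.inverse_mul_cancel _ (hP.isUnit _ (hD.lam_succ_mem hi hin))

lemma sigScalar_mem {i : ℕ} (hi : 1 ≤ i) (hin : i + 2 ≤ n) : sigScalar lam sqrt i ∈ P :=
  hP.sqrt_mem _ <| hP.mul_mem _ (hD.lam_add_two_mem hi hin) _ <| hP.inverse_mem _ <|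
    hP.mul_mem _ (hD.lam_succ_mem hi (by omega)) _ (hD.lam_succ_mem (by omega) hin)

lemma sqrt_lam_add_two {i : ℕ} (hi : 1 ≤ i) (hin : i + 2 ≤ n) :
    sqrt (lam i (i + 2)) =
      sigScalar lam sqrt i * (sqrt (lam i (i + 1)) * sqrt (lam (i + 1) (i + 2))) := by
  have h0 := hD.lam_add_two_mem hi hin
  have h1 := hD.lam_succ_mem hi (by omega)
  have h2 := hD.lam_succ_mem (i := i + 1) (by omega) hin
  have h12 := hP.mul_mem _ h1 _ h2
  rw [sigScalar, ← hP.sqrt_mul _ h1 _ h2,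
    ← hP.sqrt_mul _ (hP.mul_mem _ h0 _ (hP.inverse_mem _ h12)) _ h12, mul_assoc,
    Ring.inverse_mul_cancel _ (hP.isUnit _ h12), mul_one]

lemma stepWt_mem_center {p : ℕ} {a b : V} (h : ZJoins n 1 a b) :
    stepWt lam sqrt p (a, b) ∈ Subring.center A := by
  rcases a with a | a <;> rcases b with b | b
  · unfold stepWt
    split_ifs
    · exact hP.mem_center _ (hD.lamE_mem h)
    · exact hP.mem_center _ (hP.inverse_mem _ (hD.lamE_mem h))
  all_goals try exact one_mem _
  all_goals
    refine hP.mem_center _ ?_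
    simpa [stepWt, lamE, sigScalar] using hD.sigScalar_mem hP h.2.1 h.2.2

lemma scalarWt_mem_center {p : ℕ} {es : List (V × V)} (h : StepsOK n 1 p es) :
    scalarWt lam sqrt p es ∈ Subring.center A := by
  induction es generalizing p with
  | nil => exact one_mem _
  | cons e es ih => exact mul_mem (hD.stepWt_mem_center hP h.1.1) (ih h.2)

lemma listWt_inner {u j : ℕ} {l : List V} (hu : 1 ≤ u) (huj : u < j)
    (h : Walk n (free (j + 1)) l) :
    listWt n lam θ sqrt 1 (Sum.inl (u + 1) :: Sum.inr u :: Sum.inr j :: l) =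
      sigScalar lam sqrt u * sigScalar lam sqrt j * orderedMul n θ u (θ j) *
        listWt n lam θ sqrt 0 l := by
  have hc : scalarWt lam sqrt 0 (edges l) ∈ Subring.center A :=
    hD.scalarWt_mem_center hP (h.stepsOK le_rfl (by simp [idx]))
  have hfaces : ∀ x ∈ faces l, j < x ∧ x + 2 ≤ n := fun x hx => by
    have := h.bound_le_of_mem_faces hx
    simp only [bound] at this
    exact ⟨by omega, h.add_two_le_of_mem_faces x hx⟩
  have hodd : oddWt n θ (u :: j :: faces l) = orderedMul n θ u (θ j) * oddWt n θ (faces l) :=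
    oddWt_cons_cons huj (fun x hx => (hfaces x hx).1)
      (fun x hx => hD.anticomm _ _ hu (huj.trans (hfaces x hx).1) (hfaces x hx).2)
      (fun x hx => hD.anticomm _ _ (by omega) (hfaces x hx).1 (hfaces x hx).2)
      h.even_length_faces
  have hscalar : listWt n lam θ sqrt 1 (Sum.inl (u + 1) :: Sum.inr u :: Sum.inr j :: l) =
      sigScalar lam sqrt u * (sigScalar lam sqrt j * scalarWt lam sqrt 0 (edges l)) *
        oddWt n θ (u :: j :: faces l) := by
    simp [listWt, faces, List.filterMap_cons, h.edges_cons_cons_cons, scalarWt, sigIdx, stepWt,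
      scalarWt_add_two, lamE, sigScalar]
  rw [hscalar, hodd, listWt]
  simp only [mul_assoc]
  rw [← mul_assoc (scalarWt _ _ _ _), ← Subring.mem_center_iff.1 hc, mul_assoc]

end IsDecoration

/-! ### Sums of weights over walks -/

section Walks

variable {n : ℕ} {s : State}

lemma walks_eq_empty_of_le_idx (hs : n ≤ s.idx) : walks n s = ∅ :=
  Set.eq_empty_of_forall_notMem fun _ h => h.idx_lt.not_ge hs

lemma walks_eq_empty_of_lt_vertex (hs : n < s.vertex) : walks n s = ∅ :=
  Set.eq_empty_of_forall_notMem fun _ h => h.vertex_le.not_gt hs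

lemma walks_free (k : ℕ) :
    walks n (free k) = List.cons (Sum.inl k) '' walks n (near k) ∪
      List.cons (Sum.inl k) '' walks n (far k) := by
  ext l
  constructor
  · rintro (h | h)
    · exact .inl ⟨_, h, rfl⟩
    · exact .inr ⟨_, h, rfl⟩
  · rintro (⟨l, h, rfl⟩ | ⟨l, h, rfl⟩)
    · exact .free_near h
    · exact .free_far h

lemma walks_near_last {u : ℕ} (hu : u + 1 = n) : walks n (near u) = {[Sum.inl (u + 1)]} := by
  ext l
  constructor
  · rintro (- | - | - | h | ⟨hj, h⟩)
    · rfl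
    all_goals
      have := h.idx_lt
      simp only [idx] at this
      omega
  · rintro rfl
    exact .near_end hu

lemma walks_near {u : ℕ} (hu : u + 1 < n) :
    walks n (near u) = List.cons (Sum.inl (u + 1)) '' walks n (free (u + 2)) ∪
      ⋃ j ∈ Set.Ico (u + 1) (n - 1),
        (fun l => Sum.inl (u + 1) :: Sum.inr u :: Sum.inr j :: l) '' walks n (free (j + 1)) := by
  ext l
  simp only [Set.mem_union, Set.mem_iUnion, Set.mem_Ico]
  constructor
  · rintro (- | - | hn | h | ⟨hj, h⟩)
    · omega
    · exact .inl ⟨_, h, rfl⟩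
    · have := h.idx_lt
      simp only [idx] at this
      exact .inr ⟨_, by omega, _, h, rfl⟩
  · rintro (⟨l, h, rfl⟩ | ⟨j, hj, l, h, rfl⟩)
    · exact .near_up h
    · exact .near_inner hj.1 h

lemma walks_far (u : ℕ) :
    walks n (far u) = walks n (near (u + 1)) ∪
      (fun l => Sum.inl (u + 2) :: Sum.inl (u + 1) :: l) '' walks n (far (u + 1)) := by
  ext l
  constructor
  · rintro (- | - | - | - | - | h | h)
    · exact .inl h
    · exact .inr ⟨_, h, rfl⟩
  · rintro (h | ⟨l, h, rfl⟩)
    · exact .far_near h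
    · exact .far_down h

lemma finite_walks (n : ℕ) (s : State) : (walks n s).Finite := by
  rcases le_or_gt n s.idx with hs | hs
  · exact walks_eq_empty_of_le_idx hs ▸ Set.finite_empty
  match s with
  | free k =>
    rw [walks_free]
    exact ((finite_walks n (near k)).image _).union ((finite_walks n (far k)).image _)
  | near u =>
    rcases (show u + 1 ≤ n from hs).lt_or_eq with hu | hu
    · rw [walks_near hu]
      exact ((finite_walks n (free (u + 2))).image _).union <|
        (Set.finite_Ico _ _).biUnion fun j _ => (finite_walks n (free (j + 1))).image _
    · exact walks_near_last hu ▸ Set.finite_singleton _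
  | far u =>
    rw [walks_far]
    exact (finite_walks n (near (u + 1))).union ((finite_walks n (far (u + 1))).image _)
termination_by 2 * (n - s.idx) - s.parity
decreasing_by all_goals simp only [idx, parity, Set.mem_Ico] at *; omega

lemma disjoint_walks {s' : State} (hs : s.vertex ≠ s'.vertex) :
    Disjoint (walks n s) (walks n s') :=
  Set.disjoint_left.2 fun _ h h' => hs (by simpa using h.head?.symm.trans h'.head?)

end Walks

lemma finsum_mem_image_eq_mul {α β : Type*} {s : Set α} {f : α → β} {v : β → A} {w : α → A}
    {c : A} (hs : s.Finite) (hf : Function.Injective f) (h : ∀ a ∈ s, v (f a) = c * w a) :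
    ∑ᶠ b ∈ f '' s, v b = c * ∑ᶠ a ∈ s, w a := by
  rw [finsum_mem_image hf.injOn, finsum_mem_congr rfl h, mul_finsum_mem' _ _ hs]

/-- The sum of the weights of all the ways to reach the vertex `n` from a state. -/
noncomputable def total (n : ℕ) (lam : ℕ → ℕ → A) (θ : ℕ → A) (sqrt : A → A) (s : State) : A :=
  ∑ᶠ l ∈ walks n s, listWt n lam θ sqrt s.parity l

section Total

variable {n : ℕ} {lam : ℕ → ℕ → A} {θ : ℕ → A} {sqrt : A → A}

lemma total_eq_zero {s : State} (hs : n < s.vertex) : total n lam θ sqrt s = 0 := by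
  rw [total, walks_eq_empty_of_lt_vertex hs, finsum_mem_empty]

lemma total_free (k : ℕ) :
    total n lam θ sqrt (free k) = lam k (k + 1) * total n lam θ sqrt (near k) +
      lam k (k + 2) * total n lam θ sqrt (far k) := by
  rw [total, walks_free, finsum_mem_union
      ((Set.disjoint_image_iff List.cons_injective).2 (disjoint_walks (by simp [vertex])))
      ((finite_walks n _).image _) ((finite_walks n _).image _)]
  congr 1
  all_goals
    refine finsum_mem_image_eq_mul (finite_walks n _) List.cons_injective fun l h => ?_
    rw [listWt_cons _ h.head? rfl]
    simp [stepWt, lamE, vertex, parity]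

lemma total_near_last {u : ℕ} (hu : u + 1 = n) : total n lam θ sqrt (near u) = 1 := by
  rw [total, walks_near_last hu, finsum_mem_singleton]
  simp [listWt, faces, edges, scalarWt, oddWt, sortB]

lemma total_near {P : Set A} (hP : IsSqrtGroup P sqrt) (hD : IsDecoration n P lam θ) {u : ℕ}
    (hu : 1 ≤ u) (hun : u + 1 < n) :
    total n lam θ sqrt (near u) =
      Ring.inverse (lam (u + 1) (u + 2)) * total n lam θ sqrt (free (u + 2)) +
        ∑ j ∈ Finset.Ico (u + 1) (n - 1), sigScalar lam sqrt u * sigScalar lam sqrt j *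
          orderedMul n θ u (θ j) * total n lam θ sqrt (free (j + 1)) := by
  have hinj (j : ℕ) : Function.Injective fun l : List V =>
      Sum.inl (u + 1) :: Sum.inr u :: Sum.inr j :: l := fun l l' h => by simpa using h
  rw [total, walks_near hun, finsum_mem_union _ ((finite_walks n _).image _)
    ((Set.finite_Ico _ _).biUnion fun j _ => (finite_walks n _).image _),
    finsum_mem_biUnion _ (Set.finite_Ico _ _) fun j _ => (finite_walks n _).image _,
    ← Finset.coe_Ico, finsum_mem_coe_finset]
  · congr 1
    · refine finsum_mem_image_eq_mul (finite_walks n _) List.cons_injective fun l h => ?_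
      rw [listWt_cons _ h.head? rfl]
      simp [stepWt, lamE, vertex, parity, listWt_add_two (p := 0)]
    · refine Finset.sum_congr rfl fun j hj => ?_
      exact finsum_mem_image_eq_mul (finite_walks n _) (hinj j) fun l h =>
        hD.listWt_inner hP hu (Finset.mem_Ico.1 hj).1 h
  · rintro i - j - hij
    refine Set.disjoint_left.2 ?_
    rintro _ ⟨l, -, rfl⟩ ⟨l', -, h⟩
    exact hij (by simp_all)
  · simp only [Set.disjoint_iUnion_right]
    refine fun j _ => Set.disjoint_left.2 ?_
    rintro _ ⟨l, h, rfl⟩ ⟨l', -, h'⟩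
    obtain rfl : Sum.inr u :: Sum.inr j :: l' = l := by simpa using h'
    simpa using h.head?

lemma total_far_succ (u : ℕ) :
    total n lam θ sqrt (far u) = total n lam θ sqrt (near (u + 1)) +
      Ring.inverse (lam (u + 1) (u + 2)) * lam (u + 1) (u + 3) *
        total n lam θ sqrt (far (u + 1)) := by
  have hinj : Function.Injective fun l : List V => Sum.inl (u + 2) :: Sum.inl (u + 1) :: l :=
    List.cons_injective.comp List.cons_injective
  rw [total, walks_far, finsum_mem_union _ (finite_walks n _) ((finite_walks n _).image _)]
  · congr 1
    refine finsum_mem_image_eq_mul (finite_walks n _) hinj fun l h => ?_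
    rw [listWt_cons _ rfl rfl, listWt_cons _ h.head? rfl]
    simp [stepWt, lamE, vertex, parity, listWt_add_two (p := 1), mul_assoc]
  · refine Set.disjoint_right.2 ?_
    rintro _ ⟨l, -, rfl⟩ h
    exact h.notMem_of_rank_lt (a := Sum.inl (u + 1)) (by simp [rank, bound]) (by simp)

end Total

section Recursion

variable {n : ℕ} {P : Set A} {sqrt : A → A} {lam : ℕ → ℕ → A} {θ : ℕ → A}

lemma total_free_last {k : ℕ} (hk : k + 1 = n) :
    total n lam θ sqrt (free k) = lam k (k + 1) := by
  rw [total_free, total_near_last hk, total_eq_zero (s := far k) (by simp only [vertex]; omega),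
    mul_one, mul_zero, add_zero]

lemma total_far (hP : IsSqrtGroup P sqrt) (hD : IsDecoration n P lam θ) {u : ℕ}
    (hun : u + 2 ≤ n) :
    total n lam θ sqrt (far u) =
      Ring.inverse (lam (u + 1) (u + 2)) * total n lam θ sqrt (free (u + 1)) := by
  rw [total_far_succ, total_free, mul_add, ← mul_assoc, hD.inverse_mul_lam hP (by omega) hun,
    one_mul, mul_assoc]

/-- The expression of `λ_{k,n}` in terms of the later `λ_{j,n} = F j`, both for the sums over
super `T`-paths and for the super Ptolemy recursion. -/
noncomputable def recursionStep (n : ℕ) (lam : ℕ → ℕ → A) (θ : ℕ → A) (sqrt : A → A) (F : ℕ → A)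
    (k : ℕ) : A :=
  lam k (k + 1) * (Ring.inverse (lam (k + 1) (k + 2)) * F (k + 2) +
      ∑ j ∈ Finset.Ico (k + 1) (n - 1),
        sigScalar lam sqrt k * sigScalar lam sqrt j * orderedMul n θ k (θ j) * F (j + 1)) +
    lam k (k + 2) * (Ring.inverse (lam (k + 1) (k + 2)) * F (k + 1))

lemma recursionStep_congr {F G : ℕ → A} {k : ℕ} (hk : k + 3 ≤ n)
    (h : ∀ j, k < j → j < n → F j = G j) :
    recursionStep n lam θ sqrt F k = recursionStep n lam θ sqrt G k := by
  have hsum : ∑ j ∈ Finset.Ico (k + 1) (n - 1),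
        sigScalar lam sqrt k * sigScalar lam sqrt j * orderedMul n θ k (θ j) * F (j + 1) =
      ∑ j ∈ Finset.Ico (k + 1) (n - 1),
        sigScalar lam sqrt k * sigScalar lam sqrt j * orderedMul n θ k (θ j) * G (j + 1) :=
    Finset.sum_congr rfl fun j hj => by
      rw [Finset.mem_Ico] at hj
      rw [h (j + 1) (by omega) (by omega)]
  rw [recursionStep, hsum, h (k + 1) (by omega) (by omega), h (k + 2) (by omega) (by omega),
    recursionStep]

lemma total_free_eq_recursionStep (hP : IsSqrtGroup P sqrt) (hD : IsDecoration n P lam θ) {k : ℕ}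
    (hk : 1 ≤ k) (hkn : k + 2 ≤ n) :
    total n lam θ sqrt (free k) =
      recursionStep n lam θ sqrt (fun j => total n lam θ sqrt (free j)) k := by
  rw [total_free, total_near hP hD hk (by omega), total_far hP hD hkn, recursionStep]

lemma total_free_penult (hP : IsSqrtGroup P sqrt) (hD : IsDecoration n P lam θ) {k : ℕ}
    (hk : 1 ≤ k) (hkn : k + 2 = n) : total n lam θ sqrt (free k) = lam k (k + 2) := by
  subst hkn
  have hlast : total (k + 2) lam θ sqrt (free (k + 2)) = 0 := by
    rw [total_free, total_eq_zero (by simp [vertex]), total_eq_zero (by simp [vertex])]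
    simp
  rw [total_free_eq_recursionStep hP hD hk le_rfl, recursionStep, hlast, total_free_last rfl,
    hD.inverse_mul_lam hP (by omega) le_rfl]
  simp

end Recursion

/-! ### The super Ptolemy recursion -/

/-- The downward super Ptolemy recursion for `lamN k = λ_{k,n}` and `muN k = [k, k+1, n]`, where
`lam_flip` and `mu_flip` belong to the flip of the arc `(k + 1, k + 2)`. -/
structure IsSuperPtolemy (n : ℕ) (P : Set A) (sqrt : A → A) (lam : ℕ → ℕ → A) (θ lamN muN : ℕ → A) :
    Prop where
  mem : ∀ k, 1 ≤ k → k ≤ n - 2 → lamN k ∈ P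
  lam_penult : lamN (n - 2) = lam (n - 2) n
  lam_last : lamN (n - 1) = lam (n - 1) n
  mu_penult : muN (n - 2) = θ (n - 2)
  lam_flip : ∀ k, 1 ≤ k → k ≤ n - 3 →
    lam (k + 1) (k + 2) * lamN k
      = lam k (k + 2) * lamN (k + 1) + lam k (k + 1) * lamN (k + 2)
        + sqrt (lam k (k + 2) * lamN (k + 1) * (lam k (k + 1) * lamN (k + 2)))
          * orderedMul n θ k (muN (k + 1))
  mu_flip : ∀ k, 1 ≤ k → k ≤ n - 3 →
    muN k * sqrt (lamN k * lam (k + 1) (k + 2))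
      = θ k * sqrt (lam k (k + 2) * lamN (k + 1))
        + muN (k + 1) * sqrt (lam k (k + 1) * lamN (k + 2))

/-- The numerator of the closed form of the `μ`-invariant `[k, k+1, n]`. -/
noncomputable def muNumerator (n : ℕ) (lam : ℕ → ℕ → A) (θ : ℕ → A) (sqrt : A → A) (lamN : ℕ → A)
    (k : ℕ) : A :=
  ∑ j ∈ Finset.Ico k (n - 1), sigScalar lam sqrt j * lamN (j + 1) * θ j

lemma muNumerator_eq_add {n k : ℕ} {lam : ℕ → ℕ → A} {θ lamN : ℕ → A} {sqrt : A → A}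
    (hk : k + 2 ≤ n) :
    muNumerator n lam θ sqrt lamN k = sigScalar lam sqrt k * lamN (k + 1) * θ k +
      muNumerator n lam θ sqrt lamN (k + 1) :=
  Finset.sum_eq_sum_Ico_succ_bot (by omega) _

lemma mul_mul_eq_of_mu_flip {x z l₀ l₁ l₂ s m₀ m₁ t S : A} (hx : x ∈ Subring.center A)
    (hz : z ∈ Subring.center A) (h₀ : l₀ ∈ Subring.center A) (h₁ : l₁ ∈ Subring.center A)
    (h₂ : l₂ ∈ Subring.center A) (hs : s ∈ Subring.center A) (hu : IsUnit z)
    (hm : m₀ * (l₀ * z) = t * (s * (x * z) * l₁) + m₁ * (x * l₂)) (hS : l₁ * l₂ * m₁ = z * S) :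
    l₀ * l₁ * m₀ = x * (s * (l₁ * l₁) * t + S) := by
  lift x to Subring.center A using hx
  lift z to Subring.center A using hz
  lift l₀ to Subring.center A using h₀
  lift l₁ to Subring.center A using h₁
  lift l₂ to Subring.center A using h₂
  lift s to Subring.center A using hs
  have hc (c : Subring.center A) (a : A) : a * c = c • a := Subring.mem_center_iff.1 c.2 a
  norm_cast at hm
  simp only [hc] at hm
  refine hu.mul_left_cancel ?_
  have hS' : (l₁ * l₂) • m₁ = z • S := hS
  change z • (l₀ * l₁) • m₀ = z • x • ((s * (l₁ * l₁)) • t + S)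
  linear_combination (norm := module) l₁ • hm + x • hS'

lemma mul_eq_of_mul_mul_eq {x z l₁ l₂ s T S : A} (hx : x ∈ Subring.center A)
    (hz : z ∈ Subring.center A) (h₁ : l₁ ∈ Subring.center A) (h₂ : l₂ ∈ Subring.center A)
    (hs : s ∈ Subring.center A) (h : l₁ * l₂ * T = z * S) :
    s * (x * z) * l₁ * (x * l₂) * T = z * z * (x * x * (s * S)) := by
  lift x to Subring.center A using hx
  lift z to Subring.center A using hz
  lift l₁ to Subring.center A using h₁
  lift l₂ to Subring.center A using h₂
  lift s to Subring.center A using hs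
  have h' : (l₁ * l₂) • T = z • S := h
  change (s * (x * z) * l₁ * (x * l₂)) • T = (z * z) • (x * x) • s • S
  linear_combination (norm := module) (s * x * x * z) • h'

namespace IsSuperPtolemy

variable {n : ℕ} {P : Set A} {sqrt : A → A} {lam : ℕ → ℕ → A} {θ lamN muN : ℕ → A} {k : ℕ}

lemma lamN_last (hR : IsSuperPtolemy n P sqrt lam θ lamN muN) (hk : k + 1 = n) :
    lamN k = lam k (k + 1) := by
  subst hk
  exact hR.lam_last

lemma lamN_penult (hR : IsSuperPtolemy n P sqrt lam θ lamN muN) (hk : k + 2 = n) :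
    lamN k = lam k (k + 2) := by
  subst hk
  exact hR.lam_penult

lemma muN_penult (hR : IsSuperPtolemy n P sqrt lam θ lamN muN) (hk : k + 2 = n) :
    muN k = θ k := by
  subst hk
  exact hR.mu_penult

lemma lamN_mem (hR : IsSuperPtolemy n P sqrt lam θ lamN muN) (hD : IsDecoration n P lam θ)
    (hk : 1 ≤ k) (hkn : k < n) : lamN k ∈ P := by
  rcases (show k + 1 ≤ n from hkn).eq_or_lt with hlast | hlt
  · exact hR.lamN_last hlast ▸ hD.lam_succ_mem hk hkn
  · exact hR.mem k hk (by omega)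

variable (hR : IsSuperPtolemy n P sqrt lam θ lamN muN) (hP : IsSqrtGroup P sqrt)
  (hD : IsDecoration n P lam θ)
include hR hP hD

lemma sqrt_mul_sqrt_mul_muN (k : ℕ) (hk : 1 ≤ k) (hkn : k + 2 ≤ n) :
    sqrt (lamN k) * sqrt (lamN (k + 1)) * muN k =
      sqrt (lam k (k + 1)) * muNumerator n lam θ sqrt lamN k := by
  have hlam := hD.lam_succ_mem hk (by omega)
  have hlam' := hD.lam_succ_mem (i := k + 1) (by omega) hkn
  have hcenter {p : A} (hp : p ∈ P) := hP.mem_center _ (hP.sqrt_mem _ hp)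
  rcases hkn.eq_or_lt with hn | hlt
  · have hM : muNumerator n lam θ sqrt lamN k =
        sigScalar lam sqrt k * (sqrt (lam (k + 1) (k + 2)) * sqrt (lam (k + 1) (k + 2))) * θ k := by
      rw [muNumerator_eq_add hkn, hR.lamN_last (by omega), muNumerator,
        Finset.Ico_eq_empty (by omega), Finset.sum_empty, add_zero, hP.sqrt_mul_sqrt _ hlam']
    rw [hM, hR.muN_penult hn, hR.lamN_penult hn, hR.lamN_last (k := k + 1) (by omega),
      hD.sqrt_lam_add_two hP hk hkn, ← mul_assoc (sigScalar lam sqrt k),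
      Subring.mem_center_iff.1 (hcenter hlam)]
    simp only [mul_assoc]
  · have ih := sqrt_mul_sqrt_mul_muN (k + 1) (by omega) (by omega)
    have h0 := hR.lamN_mem hD hk (by omega)
    have h1 := hR.lamN_mem hD (k := k + 1) (by omega) (by omega)
    have h2 := hR.lamN_mem hD (k := k + 2) (by omega) (by omega)
    have hm : muN k * (sqrt (lamN k) * sqrt (lam (k + 1) (k + 2))) =
        θ k * (sigScalar lam sqrt k * (sqrt (lam k (k + 1)) * sqrt (lam (k + 1) (k + 2))) *
          sqrt (lamN (k + 1))) + muN (k + 1) * (sqrt (lam k (k + 1)) * sqrt (lamN (k + 2))) := by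
      rw [← hD.sqrt_lam_add_two hP hk hkn, ← hP.sqrt_mul _ h0 _ hlam',
        ← hP.sqrt_mul _ (hD.lam_add_two_mem hk hkn) _ h1, ← hP.sqrt_mul _ hlam _ h2]
      exact hR.mu_flip k hk (by omega)
    rw [mul_mul_eq_of_mu_flip (hcenter hlam) (hcenter hlam') (hcenter h0) (hcenter h1)
      (hcenter h2) (hP.mem_center _ (hD.sigScalar_mem hP hk hkn))
      (hP.isUnit _ (hP.sqrt_mem _ hlam')) hm ih, hP.sqrt_mul_sqrt _ h1, muNumerator_eq_add hkn]
termination_by n - k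

lemma sqrt_mul_orderedMul_muN (hk : 1 ≤ k) (hkn : k + 3 ≤ n) :
    sqrt (lam k (k + 2) * lamN (k + 1) * (lam k (k + 1) * lamN (k + 2))) *
        orderedMul n θ k (muN (k + 1)) =
      lam (k + 1) (k + 2) * (lam k (k + 1) * (sigScalar lam sqrt k *
        orderedMul n θ k (muNumerator n lam θ sqrt lamN (k + 1)))) := by
  have hlam := hD.lam_succ_mem hk (by omega)
  have hlam' := hD.lam_succ_mem (i := k + 1) (by omega) (by omega)
  have hlam'' := hD.lam_add_two_mem hk (by omega)
  have h1 := hR.lamN_mem hD (k := k + 1) (by omega) (by omega)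
  have h2 := hR.lamN_mem hD (k := k + 2) (by omega) (by omega)
  have hcenter {p : A} (hp : p ∈ P) := hP.mem_center _ (hP.sqrt_mem _ hp)
  have hmu := congrArg (orderedMul n θ k) <|
    hR.sqrt_mul_sqrt_mul_muN hP hD (k + 1) (by omega) (by omega)
  rw [orderedMul_mul (mul_mem (hcenter h1) (hcenter h2)), orderedMul_mul (hcenter hlam')] at hmu
  calc _ = sigScalar lam sqrt k * (sqrt (lam k (k + 1)) * sqrt (lam (k + 1) (k + 2))) *
          sqrt (lamN (k + 1)) * (sqrt (lam k (k + 1)) * sqrt (lamN (k + 2))) *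
          orderedMul n θ k (muN (k + 1)) := by
        rw [hP.sqrt_mul _ (hP.mul_mem _ hlam'' _ h1) _ (hP.mul_mem _ hlam _ h2),
          hP.sqrt_mul _ hlam'' _ h1, hP.sqrt_mul _ hlam _ h2,
          hD.sqrt_lam_add_two hP hk (by omega)]
    _ = sqrt (lam (k + 1) (k + 2)) * sqrt (lam (k + 1) (k + 2)) *
          (sqrt (lam k (k + 1)) * sqrt (lam k (k + 1)) * (sigScalar lam sqrt k *
            orderedMul n θ k (muNumerator n lam θ sqrt lamN (k + 1)))) :=
        mul_eq_of_mul_mul_eq (hcenter hlam) (hcenter hlam') (hcenter h1) (hcenter h2)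
          (hP.mem_center _ (hD.sigScalar_mem hP hk (by omega))) hmu
    _ = _ := by rw [hP.sqrt_mul_sqrt _ hlam, hP.sqrt_mul_sqrt _ hlam']

lemma sigScalar_mul_orderedMul_muNumerator (hk : 1 ≤ k) (hkn : k + 2 ≤ n) :
    sigScalar lam sqrt k * orderedMul n θ k (muNumerator n lam θ sqrt lamN (k + 1)) =
      ∑ j ∈ Finset.Ico (k + 1) (n - 1),
        sigScalar lam sqrt k * sigScalar lam sqrt j * orderedMul n θ k (θ j) * lamN (j + 1) := by
  rw [muNumerator, orderedMul_sum, Finset.mul_sum]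
  refine Finset.sum_congr rfl fun j hj => ?_
  rw [Finset.mem_Ico] at hj
  have hσ := hP.mem_center _ (hD.sigScalar_mem hP (i := j) (by omega) (by omega))
  have hN := hP.mem_center _ (hR.lamN_mem hD (k := j + 1) (by omega) (by omega))
  rw [orderedMul_mul (mul_mem hσ hN), mul_assoc, ← Subring.mem_center_iff.1 hN]
  simp only [mul_assoc]

lemma lamN_eq_recursionStep (hk : 1 ≤ k) (hkn : k + 3 ≤ n) :
    lamN k = recursionStep n lam θ sqrt lamN k := by
  have hinv := hD.inverse_mul_lam hP (i := k + 1) (by omega) (by omega)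
  have hcomm (x : A) : Commute (Ring.inverse (lam (k + 1) (k + 2))) x :=
    (Subring.mem_center_iff.1 (hP.mem_center _ (hP.inverse_mem _
      (hD.lam_succ_mem (i := k + 1) (by omega) (by omega)))) x).symm
  rw [recursionStep, ← hR.sigScalar_mul_orderedMul_muNumerator hP hD hk (by omega),
    ← one_mul (lamN k), ← hinv, mul_assoc, hR.lam_flip k hk (by omega),
    hR.sqrt_mul_orderedMul_muN hP hD hk hkn, mul_add, mul_add, ← mul_assoc _ (lam (k + 1) (k + 2)),
    hinv, one_mul, (hcomm _).left_comm, (hcomm (lam k (k + 1))).left_comm, mul_add]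
  abel

end IsSuperPtolemy

lemma IsSuperPtolemy.lamN_eq_total {n : ℕ} {P : Set A} {sqrt : A → A} {lam : ℕ → ℕ → A}
    {θ lamN muN : ℕ → A} (hR : IsSuperPtolemy n P sqrt lam θ lamN muN) (hP : IsSqrtGroup P sqrt)
    (hD : IsDecoration n P lam θ) (k : ℕ) (hk : 1 ≤ k) (hkn : k < n) :
    lamN k = total n lam θ sqrt (free k) := by
  obtain hlast | hpenult | hlt : k + 1 = n ∨ k + 2 = n ∨ k + 3 ≤ n := by omega
  · rw [hR.lamN_last hlast, total_free_last hlast]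
  · rw [hR.lamN_penult hpenult, total_free_penult hP hD hk hpenult]
  · rw [hR.lamN_eq_recursionStep hP hD hk hlt,
      total_free_eq_recursionStep hP hD hk (by omega)]
    exact recursionStep_congr hlt fun j hkj hjn =>
      hR.lamN_eq_total hP hD j (by omega) hjn
termination_by n - k

lemma total_free_eq_finsum_wt {n k : ℕ} {lam : ℕ → ℕ → A} {θ : ℕ → A} {sqrt : A → A}
    (hk : 1 ≤ k) :
    total n lam θ sqrt (free k) = ∑ᶠ t : SuperTPath n k false, wt n lam θ sqrt t := by
  simp only [SuperTPath.wt_eq_listWt]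
  rw [total, ← SuperTPath.range_toList hk, finsum_mem_range SuperTPath.toList_injective, parity]

theorem zigzag_lambda_length_expansion_general {n : ℕ} {P : Set A} {sqrt : A → A}
    {lam : ℕ → ℕ → A} {θ lamN muN : ℕ → A} (hP : IsSqrtGroup P sqrt)
    (hD : IsDecoration n P lam θ) (hR : IsSuperPtolemy n P sqrt lam θ lamN muN) {k : ℕ}
    (hk : 1 ≤ k) (hkn : k < n) :
    lamN k = ∑ᶠ t : SuperTPath n k false, wt n lam θ sqrt t :=
  (hR.lamN_eq_total hP hD k hk hkn).trans (total_free_eq_finsum_wt hk)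

/-- Theorem 6.4(b) of the paper.  Zig-zag triangulation of the
`n`-gon with triangles `θ_i = (i, i+1, i+2)` and the default orientation
`2 → 3 → ⋯ → n-1`, in a `ℚ`-algebra with a positive cone `Pos` of central
invertible even elements and a coherent multiplicative choice of square roots
`sqrt`; `lamN k = λ_{k,n}` and `muN k = [k,k+1,n]` are defined by the downward
super Ptolemy recursion obtained by flipping the arcs
`(n-1,n-2), (n-2,n-3), …, (k+2,k+1)` as in Theorem 6.4(a).  Then for every
`1 ≤ k ≤ n-2`:  `λ_{k,n} = Σ_{t ∈ 𝒯_{k,n}} wt(t)`, the sum of the weights of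
all super `T`-paths from `k` to `n` in the zig-zag triangulation. -/
theorem zigzag_lambda_length_expansion
    (A : Type*) [Ring A] [Algebra ℚ A] (n : ℕ) (hn : 4 ≤ n)
    (Pos : Set A) (sqrt : A → A)
    (hPosAdd : ∀ p ∈ Pos, ∀ q ∈ Pos, p + q ∈ Pos)
    (hPosMul : ∀ p ∈ Pos, ∀ q ∈ Pos, p * q ∈ Pos)
    (hPosInv : ∀ p ∈ Pos, Ring.inverse p ∈ Pos)
    (hPosCentral : ∀ p ∈ Pos, ∀ x : A, p * x = x * p)
    (hPosUnit : ∀ p ∈ Pos, IsUnit p)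
    (hsqrtSq : ∀ p ∈ Pos, sqrt p * sqrt p = p)
    (hsqrtMem : ∀ p ∈ Pos, sqrt p ∈ Pos)
    (hsqrtMul : ∀ p ∈ Pos, ∀ q ∈ Pos, sqrt (p * q) = sqrt p * sqrt q)
    (lam : ℕ → ℕ → A) (θ : ℕ → A) (lamN muN : ℕ → A)
    (hlamP : ∀ u v, u < v → ZEdge n u v → lam u v ∈ Pos)
    (hlamNP : ∀ k, 1 ≤ k → k ≤ n - 2 → lamN k ∈ Pos)
    (hθ0 : ∀ i, 1 ≤ i → i ≤ n - 2 → θ i * θ i = 0)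
    (hθanti : ∀ i j, 1 ≤ i → i ≤ n - 2 → 1 ≤ j → j ≤ n - 2 →
      θ i * θ j = -(θ j * θ i))
    (hbase1 : lamN (n - 2) = lam (n - 2) n)
    (hbase2 : lamN (n - 1) = lam (n - 1) n)
    (hbase3 : muN (n - 2) = θ (n - 2))
    (hrecLam : ∀ k, 1 ≤ k → k ≤ n - 3 →
      lam (k + 1) (k + 2) * lamN k
        = lam k (k + 2) * lamN (k + 1) + lam k (k + 1) * lamN (k + 2)
          + sqrt (lam k (k + 2) * lamN (k + 1) * (lam k (k + 1) * lamN (k + 2)))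
            * (if thetaRight n k then θ k * muN (k + 1) else muN (k + 1) * θ k))
    (hrecMu : ∀ k, 1 ≤ k → k ≤ n - 3 →
      muN k * sqrt (lamN k * lam (k + 1) (k + 2))
        = θ k * sqrt (lam k (k + 2) * lamN (k + 1))
          + muN (k + 1) * sqrt (lam k (k + 1) * lamN (k + 2))) :
    ∀ k, 1 ≤ k → k ≤ n - 2 →
      lamN k = ∑ᶠ t : SuperTPath n k false, wt n lam θ sqrt t := by
  exact fun k hk hkn => zigzag_lambda_length_expansion_general (P := Pos)
    ⟨hPosMul, hPosInv, hPosCentral, hPosUnit, hsqrtSq, hsqrtMem, hsqrtMul⟩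
    ⟨hlamP, fun i j hi hij hj => hθanti i j hi (by omega) (by omega) (by omega)⟩
    ⟨hlamNP, hbase1, hbase2, hbase3, hrecLam, hrecMu⟩ hk (by omega)

end ZigZag
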